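/- arXiv:1602.05748 — 2 statements merged into one kernel-verified Lean document; each statement's English description precedes it below -/
import Mathlib

section
/- Let D be a digraph of order n and let Y be a subset of the vertices of D with |Y| ≥ 4. Assume D is Y-strongly connected and Y satisfies condition A0. If C is a non-Hamiltonian directed cycle in D containing at least two vertices of Y, then for every vertex y of Y not on C there exists a C-bypass through y. -/
/-!
Basic definitions for finite digraphs (no loops, no multiple arcs), where the arc
relation is `A : V → V → Prop`.  Paths and cycles are given as lists of (distinct)
vertices.
-/

variable {V : Type*}

/-- A (directed) path, given by the list of its vertices. -/
def IsPathOn (A : V → V → Prop) (l : List V) : Prop :=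
  l ≠ [] ∧ l.Nodup ∧ l.Chain' A

/-- A (directed) cycle, given by the list of its vertices; its length (number of
arcs) equals the length of the list. -/
def IsCycleOn (A : V → V → Prop) (l : List V) : Prop :=
  2 ≤ l.length ∧ l.Nodup ∧ l.Chain' A ∧
    ∀ a ∈ l.getLast?, ∀ b ∈ l.head?, A a b

/-- A directed path from `a` to `b`. -/
def IsPathFromTo (A : V → V → Prop) (l : List V) (a b : V) : Prop :=
  IsPathOn A l ∧ l.head? = some a ∧ l.getLast? = some b

/-- Out-degree `d⁺(x)`. -/
noncomputable def outDeg (A : V → V → Prop) (x : V) : ℕ := {y | A x y}.ncard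

/-- In-degree `d⁻(x)`. -/
noncomputable def inDeg (A : V → V → Prop) (x : V) : ℕ := {y | A y x}.ncard

/-- Degree `d(x) = d⁺(x) + d⁻(x)`. -/
noncomputable def deg (A : V → V → Prop) (x : V) : ℕ := outDeg A x + inDeg A x

/-- Out-degree into a set, `d⁺(x, S)`. -/
noncomputable def outDegOn (A : V → V → Prop) (x : V) (S : Set V) : ℕ :=
  {y ∈ S | A x y}.ncard

/-- In-degree from a set, `d⁻(x, S)`. -/
noncomputable def inDegOn (A : V → V → Prop) (x : V) (S : Set V) : ℕ :=
  {y ∈ S | A y x}.ncard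

/-- Degree with respect to a set, `d(x, S) = d⁺(x, S) + d⁻(x, S)`. -/
noncomputable def degOn (A : V → V → Prop) (x : V) (S : Set V) : ℕ :=
  outDegOn A x S + inDegOn A x S

/-- Two distinct vertices are adjacent if there is an arc between them in some
direction. -/
def DAdj (A : V → V → Prop) (x y : V) : Prop := A x y ∨ A y x

/-- `D` is `S`-strongly connected: between any two distinct vertices of `S` there
are directed paths in both directions. -/
def SetStronglyConnected (A : V → V → Prop) (S : Set V) : Prop :=
  ∀ x ∈ S, ∀ y ∈ S, x ≠ y → ∃ l, IsPathFromTo A l x y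

/-- Strong connectivity. -/
def StronglyConnected (A : V → V → Prop) : Prop :=
  ∀ x y : V, x ≠ y → ∃ l, IsPathFromTo A l x y

/-- 2-strong connectivity: at least 3 vertices, and deleting any vertex leaves a
strongly connected digraph. -/
def TwoStronglyConnected [Fintype V] (A : V → V → Prop) : Prop :=
  3 ≤ Fintype.card V ∧
    ∀ w x y : V, x ≠ w → y ≠ w → x ≠ y → ∃ l, IsPathFromTo A l x y ∧ w ∉ l

/-- Condition `A₀` for a set `Y` of vertices. -/
def CondA0 [Fintype V] (A : V → V → Prop) (Y : Set V) : Prop :=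
  ∀ x ∈ Y, ∀ y ∈ Y, ∀ z ∈ Y,
    x ≠ y → x ≠ z → y ≠ z → ¬ DAdj A x y →
      (¬ A x z →
        deg A x + deg A y + outDeg A x + inDeg A z ≥ 3 * Fintype.card V - 2) ∧
      (¬ A z x →
        deg A x + deg A y + inDeg A x + outDeg A z ≥ 3 * Fintype.card V - 2)

/-- A `C`-bypass: a path of length at least two whose end-vertices lie on the
cycle `c` and whose internal vertices avoid `c`. -/
def IsBypass (A : V → V → Prop) (c p : List V) : Prop :=
  IsPathOn A p ∧ 3 ≤ p.length ∧
    (∀ a ∈ p.head?, a ∈ c) ∧ (∀ b ∈ p.getLast?, b ∈ c) ∧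
    ∀ v ∈ p.tail.dropLast, v ∉ c

/-- The vertex `y` can be inserted into the path `p`. -/
def CanInsert (A : V → V → Prop) (p : List V) (y : V) : Prop :=
  ∃ i, ∃ h : i + 1 < p.length, A (p[i]'(Nat.lt_of_succ_lt h)) y ∧ A y (p[i+1]'h)

/-- A `(C, x)`-path: a path from a vertex `u` of the cycle `c` to `x`, meeting `c`
only in `u`. -/
def IsCtoXPath (A : V → V → Prop) (c l : List V) (u x : V) : Prop :=
  IsPathFromTo A l u x ∧ u ∈ c ∧ ∀ v ∈ l, v ∈ c → v = u

/-- An `(x, C)`-path: a path from `x` to a vertex `v` of the cycle `c`, meeting `c`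
only in `v`. -/
def IsXtoCPath (A : V → V → Prop) (c l : List V) (x v : V) : Prop :=
  IsPathFromTo A l x v ∧ v ∈ c ∧ ∀ w ∈ l, w ∈ c → w = v

/-- No path with distinct end-vertices on `c` and internal vertices off `c` has `y` as an
internal vertex. -/
def NoBypassThrough (A : V → V → Prop) (c : List V) (y : V) : Prop :=
  ∀ (u v : V) (m : List V), u ∈ c → v ∈ c → u ≠ v → (∀ w ∈ m, w ∉ c) → m.Nodup →
    (u :: (m ++ [v])).IsChain A → y ∉ m

/-- `l` lists the internal vertices of a walk from `y` to a vertex `v` of `c`, and none of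
them lies on `c`. -/
def IsExit (A : V → V → Prop) (c : List V) (y : V) (l : List V) (v : V) : Prop :=
  (y :: (l ++ [v])).IsChain A ∧ (∀ w ∈ l, w ∉ c) ∧ v ∈ c

open Classical in
/-- The number of arcs between `t` and the pair `x`, `y`. -/
noncomputable def linkCount (A : V → V → Prop) (x y t : V) : ℕ :=
  (if A x t then 1 else 0) + (if A t y then 1 else 0) +
    ((if A y t then 1 else 0) + (if A t x then 1 else 0))

section Degrees

variable [Fintype V]

open Classical in
theorem deg_add_deg_eq_sum_linkCount (A : V → V → Prop) (x y : V) :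
    deg A x + deg A y = ∑ t, linkCount A x y t := by
  have h1 : ∀ p : V → Prop, {t | p t}.ncard = ∑ t, if p t then 1 else 0 := by
    intro p
    rw [Set.ncard_eq_toFinset_card', Set.toFinset_ofPred, Finset.card_filter]
  simp only [deg, outDeg, inDeg, linkCount, Finset.sum_add_distrib, h1]
  ring

open Classical in
theorem deg_add_deg_le {A : V → V → Prop} (hl : ∀ v, ¬ A v v) {x y : V} (hxy : x ≠ y)
    (hna : ¬ DAdj A x y) {g : V → ℕ} (hg : ∀ t, linkCount A x y t ≤ 2 + g t) :
    deg A x + deg A y + 4 ≤ 2 * Fintype.card V + ∑ t, g t := by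
  rw [deg_add_deg_eq_sum_linkCount]
  simp only [DAdj, not_or] at hna
  have h : ∀ t, linkCount A x y t + ((if t = x then 2 else 0) + (if t = y then 2 else 0))
      ≤ 2 + g t := by
    intro t
    by_cases h1 : t = x
    · subst h1
      simp [linkCount, hl, hna, hxy]
    · by_cases h2 : t = y
      · subst h2
        simp [linkCount, hl, hna, h1]
      · simpa [h1, h2] using hg t
  have := Finset.sum_le_sum (fun t (_ : t ∈ Finset.univ) => h t)
  simp only [Finset.sum_add_distrib, Finset.sum_ite_eq', Finset.mem_univ, if_true,
    Finset.sum_const, Finset.card_univ, smul_eq_mul] at this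
  omega

theorem deg_add_deg_le_of_two_exceptions {A : V → V → Prop} (hl : ∀ v, ¬ A v v) {x y : V}
    (hxy : x ≠ y) (hna : ¬ DAdj A x y) (a b : V)
    (h : ∀ t, 2 < linkCount A x y t → (t = a ∧ t = b) ∨
      (linkCount A x y t = 3 ∧ (t = a ∨ t = b))) :
    deg A x + deg A y + 2 ≤ 2 * Fintype.card V := by
  classical
  have hle4 : ∀ t, linkCount A x y t ≤ 4 := by
    intro t
    unfold linkCount
    split_ifs <;> omega
  have := deg_add_deg_le hl hxy hna
    (g := fun t => (if t = a then 1 else 0) + (if t = b then 1 else 0)) (by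
      intro t
      have h4 := hle4 t
      by_cases h2 : 2 < linkCount A x y t
      · rcases h t h2 with ⟨ha, hb⟩ | ⟨h3, ha | hb⟩
        · rw [if_pos ha, if_pos hb]; omega
        · rw [if_pos ha]; omega
        · rw [if_pos hb]; omega
      · omega)
  simp only [Finset.sum_add_distrib, Finset.sum_ite_eq', Finset.mem_univ, if_true] at this
  omega

open Classical in
theorem le_card_connectors {A : V → V → Prop} (hl : ∀ v, ¬ A v v) {p q : V} (hpq : p ≠ q)
    (hna : ¬ A p q) {m : ℕ} (h : Fintype.card V + m ≤ outDeg A p + inDeg A q + 2) :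
    m ≤ (Finset.univ.filter fun t => A p t ∧ A t q).card := by
  have ho : outDeg A p = (Finset.univ.filter fun t => A p t).card := by
    rw [outDeg, Set.ncard_eq_toFinset_card', Set.toFinset_ofPred]
  have hi : inDeg A q = (Finset.univ.filter fun t => A t q).card := by
    rw [inDeg, Set.ncard_eq_toFinset_card', Set.toFinset_ofPred]
  have hu : ((Finset.univ.filter fun t => A p t) ∪ (Finset.univ.filter fun t => A t q)).card
      + 2 ≤ Fintype.card V := by
    rw [← Finset.card_pair hpq, ← Finset.card_union_of_disjoint]
    · exact Finset.card_le_univ _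
    · rw [Finset.disjoint_right]
      intro t ht
      simp only [Finset.mem_insert, Finset.mem_singleton] at ht
      rcases ht with rfl | rfl <;> simp [hl, hna]
  have := Finset.card_union_add_card_inter
    (Finset.univ.filter fun t => A p t) (Finset.univ.filter fun t => A t q)
  rw [← Finset.filter_and] at this
  omega

/-- If `x`, `y` are nonadjacent with small degree sum, then `x` and `z` are joined, in either
direction, by an arc or by a path of length two whose middle vertex avoids a given small set. -/
theorem CondA0.exists_connector {A : V → V → Prop} (hl : ∀ v, ¬ A v v) {Y : Set V}
    (hA0 : CondA0 A Y) {x y z : V} (hx : x ∈ Y) (hy : y ∈ Y) (hz : z ∈ Y) (hxy : x ≠ y)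
    (hxz : x ≠ z) (hyz : y ≠ z) (hna : ¬ DAdj A x y) {m : ℕ}
    (hm : deg A x + deg A y + m ≤ 2 * Fintype.card V) (s : Finset V) (hs : s.card < m) :
    (¬ A x z → ∃ t, t ∉ s ∧ A x t ∧ A t z) ∧ (¬ A z x → ∃ t, t ∉ s ∧ A z t ∧ A t x) := by
  classical
  obtain ⟨h1, h2⟩ := hA0 x hx y hy z hz hxy hxz hyz hna
  constructor
  · intro h
    have := h1 h
    have := le_card_connectors hl hxz h (m := m) (by omega)
    obtain ⟨t, ht, hts⟩ := Finset.exists_mem_notMem_of_card_lt_card (hs.trans_le this)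
    exact ⟨t, hts, (Finset.mem_filter.1 ht).2⟩
  · intro h
    have := h2 h
    have := le_card_connectors hl hxz.symm h (m := m) (by omega)
    obtain ⟨t, ht, hts⟩ := Finset.exists_mem_notMem_of_card_lt_card (hs.trans_le this)
    exact ⟨t, hts, (Finset.mem_filter.1 ht).2⟩

end Degrees

section Reversal

theorem NoBypassThrough.flip {A : V → V → Prop} {c : List V} {y : V}
    (h : NoBypassThrough A c y) : NoBypassThrough (flip A) c y := by
  intro u v m hu hv huv hm hnd hch hy
  refine h v u m.reverse hv hu huv.symm (by simpa using hm) (by simpa using hnd) ?_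
    (by simpa using hy)
  have := List.isChain_reverse.2 hch
  simpa [_root_.flip] using this

theorem SetStronglyConnected.flip {A : V → V → Prop} {Y : Set V}
    (h : SetStronglyConnected A Y) : SetStronglyConnected (flip A) Y := by
  intro x hx y hy hxy
  obtain ⟨l, ⟨h1, h2, h3⟩, h4, h5⟩ := h y hy x hx hxy.symm
  refine ⟨l.reverse, ⟨by simpa using h1, by simpa using h2, ?_⟩, by simpa using h5,
    by simpa using h4⟩
  exact List.isChain_reverse.2 h3

theorem CondA0.flip [Fintype V] {A : V → V → Prop} {Y : Set V} (h : CondA0 A Y) :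
    CondA0 (flip A) Y := by
  intro x hx y hy z hz hxy hxz hyz hna
  obtain ⟨h1, h2⟩ := h x hx y hy z hz hxy hxz hyz (fun hh => hna hh.symm)
  have hd : ∀ v, deg (_root_.flip A) v = deg A v := fun v => Nat.add_comm _ _
  rw [hd, hd]
  exact ⟨h2, h1⟩

end Reversal

section Exits

variable {A : V → V → Prop} {c : List V} {y : V}

theorem exists_isExit_of_isChain (p : List V) (hp : (y :: p).IsChain A)
    (h : ∃ w ∈ p, w ∈ c) : ∃ l v, IsExit A c y l v := by
  induction p generalizing y with
  | nil => simp at h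
  | cons a p ih =>
    rw [List.isChain_cons_cons] at hp
    by_cases ha : a ∈ c
    · exact ⟨[], a, by simpa using hp.1, by simp, ha⟩
    · obtain ⟨l, v, h1, h2, h3⟩ := ih hp.2 (by
        obtain ⟨w, hw, hwc⟩ := h
        rcases List.mem_cons.1 hw with rfl | hw
        · exact absurd hwc ha
        · exact ⟨w, hw, hwc⟩)
      exact ⟨a :: l, v, by simpa using ⟨hp.1, h1⟩, by simpa using ⟨ha, h2⟩, h3⟩

theorem SetStronglyConnected.exists_isExit {Y : Set V} (h : SetStronglyConnected A Y) {x : V}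
    (hx : x ∈ Y) (hy : y ∈ Y) (hxc : x ∈ c) (hyc : y ∉ c) : ∃ l v, IsExit A c y l v := by
  have hyx : y ≠ x := fun e => hyc (e ▸ hxc)
  obtain ⟨l, ⟨_, _, h3⟩, h4, h5⟩ := h y hy x hx hyx
  cases l with
  | nil => simp at h4
  | cons a p =>
    obtain rfl : a = y := by simpa using h4
    refine exists_isExit_of_isChain p h3 ⟨x, ?_, hxc⟩
    rcases List.mem_cons.1 (List.mem_of_getLast? h5) with e | e
    · exact absurd e.symm hyx
    · exact e

theorem exists_minimal_isExit (h : ∃ l v, IsExit A c y l v) :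
    ∃ l v, IsExit A c y l v ∧ ∀ l' v', IsExit A c y l' v' → l.length ≤ l'.length := by
  classical
  have h' : ∃ n, ∃ l v, IsExit A c y l v ∧ l.length = n := by
    obtain ⟨l, v, h⟩ := h
    exact ⟨_, l, v, h, rfl⟩
  obtain ⟨l, v, hlv, hn⟩ := Nat.find_spec h'
  exact ⟨l, v, hlv, fun l' v' h1 => hn ▸ Nat.find_min' h' ⟨l', v', h1, rfl⟩⟩

theorem IsExit.cons_suffix {l₁ l₂ : List V} {w v : V} (h : IsExit A c y (l₁ ++ w :: l₂) v) :
    IsExit A c w l₂ v := by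
  obtain ⟨h1, h2, h3⟩ := h
  refine ⟨?_, fun u hu => h2 u (by simp [hu]), h3⟩
  have h4 : ((y :: l₁) ++ (w :: (l₂ ++ [v]))).IsChain A := by simpa using h1
  exact h4.right_of_append

theorem IsExit.prefix_snoc {l₁ l₂ : List V} {w v x : V} (h : IsExit A c y (l₁ ++ w :: l₂) v)
    (hw : A w x) (hx : x ∈ c) : IsExit A c y (l₁ ++ [w]) x := by
  obtain ⟨h1, h2, h3⟩ := h
  refine ⟨?_, fun u hu => h2 u (by simp at hu ⊢; tauto), hx⟩
  have h4 : ((y :: (l₁ ++ [w])) ++ (l₂ ++ [v])).IsChain A := by simpa using h1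
  have h5 := h4.left_of_append
  have h6 : ((y :: (l₁ ++ [w])) ++ [x]).IsChain A := by
    rw [List.isChain_append]
    refine ⟨h5, by simp, ?_⟩
    intro a ha b hb
    have ha' : (y :: (l₁ ++ [w])).getLast? = some w := by
      rw [← List.cons_append, List.getLast?_concat]
    rw [ha'] at ha
    simp at ha hb
    subst ha hb
    exact hw
  simpa using h6

theorem IsExit.cons {l : List V} {w v : V} (h : IsExit A c w l v) (hw : w ∉ c) (ha : A y w) :
    IsExit A c y (w :: l) v :=
  ⟨by simpa using ⟨ha, h.1⟩, by simpa using ⟨hw, h.2.1⟩, h.2.2⟩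

theorem IsExit.notMem_of_minimal {l : List V} {v : V} (h : IsExit A c y l v)
    (hmin : ∀ l', IsExit A c y l' v → l.length ≤ l'.length) : y ∉ l := by
  intro hy
  obtain ⟨l₁, l₂, rfl⟩ := List.append_of_mem hy
  have := hmin _ h.cons_suffix
  simp at this
  omega

theorem IsExit.nodup_of_minimal {l : List V} {v : V} (h : IsExit A c y l v)
    (hmin : ∀ l', IsExit A c y l' v → l.length ≤ l'.length) : l.Nodup := by
  induction l generalizing y with
  | nil => simp
  | cons a l ih =>
    have ha : A y a := (List.isChain_cons_cons.1 h.1).1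
    have hac : a ∉ c := h.2.1 a (by simp)
    have h' : IsExit A c a l v := h.cons_suffix (l₁ := [])
    have hmin' : ∀ l', IsExit A c a l' v → l.length ≤ l'.length := fun l' hl' => by
      simpa using hmin _ (hl'.cons hac ha)
    exact List.nodup_cons.2 ⟨h'.notMem_of_minimal hmin', ih h' hmin'⟩

/-- An arc from the cycle to `y` pins the end of every exit from `y`. -/
theorem IsExit.eq_of_arc (hnb : NoBypassThrough A c y) (hyc : y ∉ c) {s : V} (hs : s ∈ c)
    (hsy : A s y) {l : List V} {v : V} (h : IsExit A c y l v) : v = s := by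
  by_contra hvs
  classical
  have hex : ∃ n, ∃ l, IsExit A c y l v ∧ l.length = n := ⟨_, l, h, rfl⟩
  obtain ⟨m, hm, hn⟩ := Nat.find_spec hex
  have hmin : ∀ l', IsExit A c y l' v → m.length ≤ l'.length := fun l' h1 =>
    hn ▸ Nat.find_min' hex ⟨l', h1, rfl⟩
  refine hnb s v (y :: m) hs h.2.2 (Ne.symm hvs) ?_ ?_ ?_ (by simp)
  · simpa using ⟨hyc, hm.2.1⟩
  · exact List.nodup_cons.2 ⟨hm.notMem_of_minimal hmin, hm.nodup_of_minimal hmin⟩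
  · simpa using ⟨hsy, hm.1⟩

/-- In a shortest exit from `y`, only the first and last vertices may be joined to `y` and a
vertex `x` of the cycle by more than two arcs. -/
theorem linkCount_eq_three_of_minimal (hnb : NoBypassThrough A c y) (hyc : y ∉ c)
    {l : List V} {v : V} (h : IsExit A c y l v)
    (hmin : ∀ l' v', IsExit A c y l' v' → l.length ≤ l'.length) {x t : V} (hx : x ∈ c)
    (hxv : x ≠ v) (hxy : ¬ A x y) (ht : t ∉ c) (hyt : ¬ (A y t ∧ A t x))
    (h2 : 2 < linkCount A x y t) :
    linkCount A x y t = 3 ∧ ((∃ l', l = t :: l') ∨ (A t x ∧ ∃ l', l = l' ++ [t])) := by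
  have hxt : A x t := by
    by_contra hh
    unfold linkCount at h2
    split_ifs at h2 <;> first | omega | tauto
  have hty : A t y := by
    by_contra hh
    unfold linkCount at h2
    split_ifs at h2 <;> first | omega | tauto
  have hor : A y t ∨ A t x := by
    by_contra hh
    unfold linkCount at h2
    split_ifs at h2 <;> first | omega | tauto
  refine ⟨?_, ?_⟩
  · unfold linkCount
    rcases hor with h3 | h3
    · simp [hxt, hty, h3, show ¬ A t x from fun h4 => hyt ⟨h3, h4⟩]
    · simp [hxt, hty, h3, show ¬ A y t from fun h4 => hyt ⟨h4, h3⟩]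
  have htl : t ∈ l := by
    by_contra htl
    have hyl := h.notMem_of_minimal fun l' => hmin l' v
    have hnd := h.nodup_of_minimal fun l' => hmin l' v
    have hty' : t ≠ y := fun e => hxy (e ▸ hxt)
    refine hnb x v (t :: y :: l) hx h.2.2 hxv ?_ ?_ ?_ (by simp)
    · simpa using ⟨ht, hyc, h.2.1⟩
    · simp [hty', htl, hyl, hnd]
    · simpa using ⟨hxt, hty, h.1⟩
  obtain ⟨l₁, l₂, rfl⟩ := List.append_of_mem htl
  rcases hor with h3 | h3
  · left
    have := hmin _ _ (h.cons_suffix.cons ht h3)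
    have : l₁ = [] := by
      rw [← List.length_eq_zero_iff]
      simp only [List.length_append, List.length_cons] at this
      omega
    exact ⟨l₂, by simp [this]⟩
  · right
    have := hmin _ _ (h.prefix_snoc h3 hx)
    have : l₂ = [] := by
      rw [← List.length_eq_zero_iff]
      simp only [List.length_append, List.length_cons, List.length_nil] at this
      omega
    exact ⟨h3, l₁, by simp [this]⟩

end Exits

section Cases

variable {A : V → V → Prop} {c : List V} {y : V} {Y : Set V}

theorem linkCount_le_two_of_not_dAdj {x t : V} (h : ¬ DAdj A y t) : linkCount A x y t ≤ 2 := by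
  simp only [DAdj, not_or] at h
  unfold linkCount
  simp only [h, if_false]
  split_ifs <;> omega

theorem connector_eq_connector (hl : ∀ v, ¬ A v v) (hnb : NoBypassThrough A c y) (hyc : y ∉ c)
    (hna : ∀ t ∈ c, ¬ DAdj A y t) {x z t t' : V} (hxc : x ∈ c) (hzc : z ∈ c) (hxz : x ≠ z)
    (ht : A x t ∧ A t y) (ht' : A y t' ∧ A t' z) : t = t' := by
  by_contra hne
  have htc : t ∉ c := fun h => hna t h (Or.inr ht.2)
  have htc' : t' ∉ c := fun h => hna t' h (Or.inl ht'.1)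
  have h1 : t ≠ y := fun e => hl y (e ▸ ht.2)
  have h2 : y ≠ t' := fun e => hl y (e ▸ ht'.1)
  refine hnb x z [t, y, t'] hxc hzc hxz ?_ ?_ ?_ (by simp)
  · simp [htc, hyc, htc']
  · simp [h1, h2, hne]
  · simp [ht, ht']

variable [Fintype V]

/-- If `y` has an in-neighbour on the cycle, then there is a bypass through `y`. -/
theorem false_of_arc_from_cycle (hl : ∀ v, ¬ A v v) (hY : 4 ≤ Y.ncard)
    (hconn : SetStronglyConnected A Y) (hA0 : CondA0 A Y) (hnb : NoBypassThrough A c y)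
    (hy : y ∈ Y) (hyc : y ∉ c) {s x : V} (hs : s ∈ c) (hsy : A s y) (hx : x ∈ Y) (hxc : x ∈ c)
    (hxs : x ≠ s) : False := by
  classical
  have hend : ∀ {l v}, IsExit A c y l v → v = s := fun h => h.eq_of_arc hnb hyc hs hsy
  obtain ⟨l, v, hlv, hmin⟩ := exists_minimal_isExit (hconn.exists_isExit hx hy hxc hyc)
  obtain rfl := hend hlv
  have hout : ∀ t ∈ c, A y t → t = v := fun t ht h =>
    hend (l := []) ⟨by simpa using h, by simp, ht⟩
  have hna : ∀ t ∈ c, t ≠ v → ¬ DAdj A y t := by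
    rintro t ht htv (h | h)
    · exact htv (hout t ht h)
    · exact htv (hlv.eq_of_arc hnb hyc ht h).symm
  have hnc : ∀ t, t ∉ c → ∀ x' ∈ c, x' ≠ v → ¬ (A y t ∧ A t x') := fun t ht x' hx' hxv h =>
    hxv (hend (l := [t]) ⟨by simpa using h, by simpa using ht, hx'⟩)
  have hyx : y ≠ x := fun e => hyc (e ▸ hxc)
  have hnax : ¬ DAdj A y x := hna x hxc hxs
  have hdeg : deg A x + deg A y + 2 ≤ 2 * Fintype.card V := by
    refine deg_add_deg_le_of_two_exceptions hl hyx.symm (fun h => hnax h.symm) v (l.headD v) ?_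
    intro t h2
    by_cases htc : t ∈ c
    · have htv : t = v := by
        by_contra htv
        have := linkCount_le_two_of_not_dAdj (x := x) (hna t htc htv)
        omega
      subst htv
      cases l with
      | nil => simp
      | cons a l' =>
        right
        have hyt : ¬ A y t := fun h => by
          have := hmin [] t ⟨by simpa using h, by simp, hs⟩
          simp at this
        refine ⟨?_, Or.inl rfl⟩
        unfold linkCount at h2 ⊢
        simp only [hyt, if_false] at h2 ⊢
        split_ifs at h2 ⊢ <;> omega
    · obtain ⟨h3, ⟨l', rfl⟩ | ⟨htx, l', rfl⟩⟩ :=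
        linkCount_eq_three_of_minimal hnb hyc hlv hmin hxc hxs
          (fun h => hnax (Or.inr h)) htc (hnc t htc x hxc hxs) h2
      · exact Or.inr ⟨h3, Or.inr rfl⟩
      · exact absurd (hend (hlv.prefix_snoc htx hxc)) hxs
  obtain ⟨z, hz, hzn⟩ : ∃ z ∈ Y, z ∉ ({x, y, v} : Set V) := by
    refine Set.exists_mem_notMem_of_ncard_lt_ncard ?_
    have := Finset.card_le_three (a := x) (b := y) (c := v)
    rw [← Set.ncard_coe_finset] at this
    push_cast at this
    omega
  simp only [Set.mem_insert_iff, Set.mem_singleton_iff, not_or] at hzn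
  obtain ⟨hzx, hzy, hzv⟩ := hzn
  have hyz := (hA0.exists_connector hl hy hx hz hyx (Ne.symm hzy) (Ne.symm hzx) hnax
    (m := 2) (by omega) {v} (by simp)).1
  have hzc : z ∉ c := by
    intro hzc
    obtain ⟨t, htv, h1, h2⟩ := hyz fun h => hzv (hout z hzc h)
    have htc : t ∉ c := fun htc => htv (by simpa using hout t htc h1)
    exact hnc t htc z hzc hzv ⟨h1, h2⟩
  have hreach : ∀ {l' v'}, IsExit A c z l' v' → v' = v := by
    intro l' v' h
    by_cases h1 : A y z
    · exact hend (h.cons hzc h1)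
    · obtain ⟨t, htv, h1, h2⟩ := hyz h1
      have htc : t ∉ c := fun htc => htv (by simpa using hout t htc h1)
      exact hend ((h.cons hzc h2).cons htc h1)
  obtain ⟨t, htv, h1, h2⟩ := (hA0.exists_connector hl hx hy hz hyx.symm (Ne.symm hzx)
    (Ne.symm hzy) (fun h => hnax h.symm) (m := 2) (by omega) {v} (by simp)).2
    fun h => hxs (hreach (l' := []) ⟨by simpa using h, by simp, hxc⟩)
  by_cases htc : t ∈ c
  · exact htv (by simpa using hreach (l' := []) ⟨by simpa using h1, by simp, htc⟩)
  · exact hxs (hreach (l' := [t]) ⟨by simpa using ⟨h1, h2⟩, by simpa using htc, hxc⟩)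

/-- If no path of length two leads from `y` to a vertex of `Y` on the cycle, then there is a
bypass through `y`. -/
theorem false_of_no_out_connector (hl : ∀ v, ¬ A v v)
    (hconn : SetStronglyConnected A Y) (hA0 : CondA0 A Y) (hnb : NoBypassThrough A c y)
    (hy : y ∈ Y) (hyc : y ∉ c) (hna : ∀ t ∈ c, ¬ DAdj A y t)
    (hYc : ∀ s : V, ∃ x ∈ Y, x ∈ c ∧ x ≠ s)
    (hno : ∀ x ∈ Y, x ∈ c → ∀ t, ¬ (A y t ∧ A t x)) : False := by
  obtain ⟨x₀, hx₀, hx₀c, -⟩ := hYc y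
  obtain ⟨l, v, hlv, hmin⟩ := exists_minimal_isExit (hconn.exists_isExit hx₀ hy hx₀c hyc)
  obtain ⟨x, hx, hxc, hxv⟩ := hYc v
  obtain ⟨z, hz, hzc, hzx⟩ := hYc x
  have hyx : y ≠ x := fun e => hyc (e ▸ hxc)
  have hyz : y ≠ z := fun e => hyc (e ▸ hzc)
  have hdeg : deg A x + deg A y + 2 ≤ 2 * Fintype.card V := by
    refine deg_add_deg_le_of_two_exceptions hl hyx.symm (fun h => hna x hxc h.symm)
      (l.headD v) (l.getLastD v) ?_
    intro t h2
    by_cases htc : t ∈ c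
    · have := linkCount_le_two_of_not_dAdj (x := x) (hna t htc)
      omega
    · obtain ⟨h3, ⟨l', rfl⟩ | ⟨_, l', rfl⟩⟩ :=
        linkCount_eq_three_of_minimal hnb hyc hlv hmin hxc hxv
          (fun h => hna x hxc (Or.inr h)) htc (hno x hx hxc t) h2
      · exact Or.inr ⟨h3, Or.inl rfl⟩
      · exact Or.inr ⟨h3, Or.inr (by simp)⟩
  obtain ⟨t, -, ht⟩ := (hA0.exists_connector hl hy hx hz hyx hyz (Ne.symm hzx) (hna x hxc)
    (m := 2) (by omega) ∅ (by simp)).1 fun h => hna z hzc (Or.inl h)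
  exact hno z hz hzc t ht

/-- If paths of length two lead from `x` to `y` and from `y` to `z`, for distinct `x`, `z` of `Y`
on the cycle, then there is a bypass through `y`. -/
theorem false_of_connectors (hl : ∀ v, ¬ A v v) (hA0 : CondA0 A Y)
    (hnb : NoBypassThrough A c y) (hy : y ∈ Y) (hyc : y ∉ c) (hna : ∀ t ∈ c, ¬ DAdj A y t)
    {x z w w' : V} (hx : x ∈ Y) (hxc : x ∈ c) (hz : z ∈ Y) (hzc : z ∈ c) (hxz : x ≠ z)
    (hw : A x w ∧ A w y) (hw' : A y w' ∧ A w' z) : False := by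
  have hyx : y ≠ x := fun e => hyc (e ▸ hxc)
  have hyz : y ≠ z := fun e => hyc (e ▸ hzc)
  have hin : ∀ t, A x t ∧ A t y → t = w' := fun t ht =>
    connector_eq_connector hl hnb hyc hna hxc hzc hxz ht hw'
  have hout : ∀ t, A y t ∧ A t z → t = w := fun t ht =>
    (connector_eq_connector hl hnb hyc hna hxc hzc hxz hw ht).symm
  by_cases h : ∃ w₂, A z w₂ ∧ A w₂ y
  · obtain ⟨w₂, hw₂⟩ := h
    have hout₂ : ∀ t, A y t ∧ A t x → t = w₂ := fun t ht =>
      (connector_eq_connector hl hnb hyc hna hzc hxc hxz.symm hw₂ ht).symm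
    have hdeg : deg A x + deg A y + 2 ≤ 2 * Fintype.card V := by
      refine deg_add_deg_le_of_two_exceptions hl hyx.symm (fun h => hna x hxc h.symm) w' w₂ ?_
      intro t h2
      have h3 := hin t
      have h4 := hout₂ t
      unfold linkCount at h2 ⊢
      split_ifs at h2 ⊢ <;> first | omega | tauto
    obtain ⟨t, ht, ht'⟩ := (hA0.exists_connector hl hy hx hz hyx hyz hxz (hna x hxc)
      (m := 2) (by omega) {w} (by simp)).1 fun h => hna z hzc (Or.inl h)
    exact ht (by simpa using hout t ht')
  · have hdeg : deg A z + deg A y + 2 ≤ 2 * Fintype.card V := by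
      refine deg_add_deg_le_of_two_exceptions hl hyz.symm (fun h => hna z hzc h.symm) w w ?_
      intro t h2
      have h3 : ¬ (A z t ∧ A t y) := fun h3 => h ⟨t, h3⟩
      have h4 := hout t
      unfold linkCount at h2 ⊢
      split_ifs at h2 ⊢ <;> first | omega | tauto
    obtain ⟨t, ht, ht'⟩ := (hA0.exists_connector hl hy hz hx hyz hyx hxz.symm (hna z hzc)
      (m := 2) (by omega) {w'} (by simp)).2 fun h => hna x hxc (Or.inr h)
    exact ht (by simpa using hin t ht')

/-- If some `x` of `Y` on the cycle is not joined to `y` by a path of length two in either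
direction, then there is a bypass through `y`. -/
theorem false_of_no_connector (hl : ∀ v, ¬ A v v) (hY : 4 ≤ Y.ncard) (hA0 : CondA0 A Y)
    (hnb : NoBypassThrough A c y) (hy : y ∈ Y) (hyc : y ∉ c) (hna : ∀ t ∈ c, ¬ DAdj A y t)
    {x z : V} (hx : x ∈ Y) (hxc : x ∈ c) (hz : z ∈ Y) (hzc : z ∈ c) (hxz : x ≠ z)
    (hin : ∀ t, ¬ (A x t ∧ A t y)) (hout : ∀ t, ¬ (A y t ∧ A t x)) : False := by
  classical
  have hyx : y ≠ x := fun e => hyc (e ▸ hxc)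
  have hyz : y ≠ z := fun e => hyc (e ▸ hzc)
  have hnax : ¬ DAdj A x y := fun h => hna x hxc h.symm
  have hdeg : deg A x + deg A y + 4 ≤ 2 * Fintype.card V := by
    have := deg_add_deg_le hl hyx.symm hnax (g := fun _ => 0) (by
      intro t
      have h3 := hin t
      have h4 := hout t
      unfold linkCount
      split_ifs <;> first | omega | tauto)
    simpa using this
  obtain ⟨q, hq, hqn⟩ : ∃ q ∈ Y, q ∉ ({x, y, z} : Set V) := by
    refine Set.exists_mem_notMem_of_ncard_lt_ncard ?_
    have := Finset.card_le_three (a := x) (b := y) (c := z)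
    rw [← Set.ncard_coe_finset] at this
    push_cast at this
    omega
  simp only [Set.mem_insert_iff, Set.mem_singleton_iff, not_or] at hqn
  obtain ⟨hqx, hqy, hqz⟩ := hqn
  have hyt : ∀ s : Finset V, s.card < 4 → ∃ t, t ∉ s ∧ A y t ∧ A t z := fun s hs =>
    (hA0.exists_connector hl hy hx hz hyx hyz hxz (hna x hxc) (m := 4) (by omega) s hs).1
      fun h => hna z hzc (Or.inl h)
  have hqb : ∀ s : Finset V, s.card < 4 → ¬ A q y → ∃ t, t ∉ s ∧ A q t ∧ A t y := fun s hs =>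
    (hA0.exists_connector hl hy hx hq hyx (Ne.symm hqy) (Ne.symm hqx) (hna x hxc) (m := 4)
      (by omega) s hs).2
  have hxa : ∀ s : Finset V, s.card < 4 → ¬ A x q → ∃ t, t ∉ s ∧ A x t ∧ A t q := fun s hs =>
    (hA0.exists_connector hl hx hy hq hyx.symm (Ne.symm hqx) (Ne.symm hqy) hnax (m := 4)
      (by omega) s hs).1
  -- any path of length at most three from the cycle to `y` extends to a bypass
  have hext : ∀ (u : V) (m : List V), u ∈ c → u ≠ z → (∀ w ∈ m, w ∉ c) → m.Nodup → y ∉ m →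
      m.length ≤ 3 → (u :: (m ++ [y])).IsChain A → False := by
    intro u m hu huz hm hnd hym hlen hch
    obtain ⟨t, htm, h1, h2⟩ := hyt m.toFinset (by
      have := List.toFinset_card_le m
      omega)
    have htc : t ∉ c := fun h => hna t h (Or.inl h1)
    have hty : t ≠ y := fun e => hl y (e ▸ h1)
    refine hnb u z (m ++ [y, t]) hu hzc huz ?_ ?_ ?_ (by simp)
    · intro w hw
      simp only [List.mem_append, List.mem_cons, List.not_mem_nil, or_false] at hw
      rcases hw with hw | rfl | rfl
      exacts [hm w hw, hyc, htc]
    · rw [List.nodup_append]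
      refine ⟨hnd, by simp [hty.symm], ?_⟩
      intro a ha b hb e
      subst e
      simp only [List.mem_cons, List.not_mem_nil, or_false] at hb
      rcases hb with rfl | rfl
      · exact hym ha
      · exact htm (by simpa using ha)
    · have h3 : ((u :: m) ++ [y] ++ [t, z]).IsChain A := by
        refine List.IsChain.append_overlap (by simpa using hch) ?_ (by simp)
        simp [h1, h2]
      simpa using h3
  -- any path of length at most two from the cycle to `q` extends to such a path
  have hext' : ∀ (u : V) (m : List V), u ∈ c → u ≠ z → (∀ w ∈ m, w ∉ c) → (m ++ [q]).Nodup →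
      y ∉ m → m.length ≤ 1 → q ∉ c → (u :: (m ++ [q])).IsChain A → False := by
    intro u m hu huz hm hnd hym hlen hqc hch
    have hmq : ∀ w ∈ m ++ [q], w ∉ c := by
      intro w hw
      rcases List.mem_append.1 hw with hw | hw
      · exact hm w hw
      · exact (List.mem_singleton.1 hw) ▸ hqc
    have hymq : y ∉ m ++ [q] := by simp [hym, Ne.symm hqy]
    by_cases hqy' : A q y
    · refine hext u (m ++ [q]) hu huz hmq hnd hymq (by simp; omega) ?_
      have h3 : ((u :: m) ++ [q] ++ [y]).IsChain A :=
        List.IsChain.append_overlap (by simpa using hch) (by simpa using hqy') (by simp)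
      simpa using h3
    · obtain ⟨b, hbm, h1, h2⟩ := hqb (m ++ [q]).toFinset (by
        have := List.toFinset_card_le (m ++ [q])
        simp only [List.length_append, List.length_singleton] at this
        omega) hqy'
      have hbm' : b ∉ m ++ [q] := fun h => hbm (List.mem_toFinset.2 h)
      have hbc : b ∉ c := fun h => hna b h (Or.inr h2)
      have hby : b ≠ y := fun e => hl y (e ▸ h2)
      refine hext u (m ++ [q] ++ [b]) hu huz ?_ ?_ ?_ (by simp; omega) ?_
      · intro w hw
        rcases List.mem_append.1 hw with hw | hw
        · exact hmq w hw
        · exact (List.mem_singleton.1 hw) ▸ hbc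
      · rw [List.nodup_append]
        refine ⟨hnd, by simp, ?_⟩
        intro a ha b' hb' e
        rw [List.mem_singleton.1 hb'] at e
        exact hbm' (e ▸ ha)
      · intro h
        rcases List.mem_append.1 h with h | h
        · exact hymq h
        · exact hby (List.mem_singleton.1 h).symm
      · have h3 : ((u :: m) ++ [q] ++ [b, y]).IsChain A :=
          List.IsChain.append_overlap (by simpa using hch) (by simp [h1, h2]) (by simp)
        simpa using h3
  by_cases hqc : q ∈ c
  · obtain ⟨b, -, h1, h2⟩ := hqb ∅ (by simp) fun h => hna q hqc (Or.inr h)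
    have hbc : b ∉ c := fun h => hna b h (Or.inr h2)
    have hby : b ≠ y := fun e => hl y (e ▸ h2)
    exact hext q [b] hqc hqz (by simpa using hbc) (by simp) (by simpa using hby.symm) (by simp)
      (by simp [h1, h2])
  · by_cases hxq : A x q
    · exact hext' x [] hxc hxz (by simp) (by simp) (by simp) (by simp) hqc (by simpa using hxq)
    · obtain ⟨a, haz, h1, h2⟩ := hxa {z} (by simp) hxq
      by_cases hac : a ∈ c
      · exact hext' a [] hac (by simpa using haz) (by simp) (by simp) (by simp) (by simp) hqc
          (by simpa using h2)
      · have haq : a ≠ q := fun e => hl q (e ▸ h2)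
        have hay : a ≠ y := fun e => hnax (Or.inl (e ▸ h1))
        exact hext' x [a] hxc hxz (by simpa using hac) (by simpa using haq)
          (by simpa using hay.symm) (by simp) hqc (by simp [h1, h2])

theorem not_noBypassThrough (hl : ∀ v, ¬ A v v) (hY : 4 ≤ Y.ncard)
    (hconn : SetStronglyConnected A Y) (hA0 : CondA0 A Y)
    (hYc : ∀ s : V, ∃ x ∈ Y, x ∈ c ∧ x ≠ s) (hy : y ∈ Y) (hyc : y ∉ c) :
    ¬ NoBypassThrough A c y := by
  intro hnb
  by_cases hadj : ∃ s ∈ c, DAdj A y s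
  · obtain ⟨s, hs, h⟩ := hadj
    obtain ⟨x, hx, hxc, hxs⟩ := hYc s
    rcases h with h | h
    · exact false_of_arc_from_cycle (A := flip A) hl hY hconn.flip hA0.flip hnb.flip hy hyc hs h
        hx hxc hxs
    · exact false_of_arc_from_cycle hl hY hconn hA0 hnb hy hyc hs h hx hxc hxs
  · have hna : ∀ t ∈ c, ¬ DAdj A y t := fun t ht h => hadj ⟨t, ht, h⟩
    by_cases hout : ∀ x ∈ Y, x ∈ c → ∀ t, ¬ (A y t ∧ A t x)
    · exact false_of_no_out_connector hl hconn hA0 hnb hy hyc hna hYc hout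
    by_cases hin : ∀ x ∈ Y, x ∈ c → ∀ t, ¬ (A t y ∧ A x t)
    · exact false_of_no_out_connector (A := flip A) hl hconn.flip hA0.flip hnb.flip hy hyc
        (fun t ht h => hna t ht h.symm) hYc hin
    push Not at hout hin
    obtain ⟨z, hz, hzc, w', hw'⟩ := hout
    obtain ⟨x, hx, hxc, w, hw⟩ := hin
    by_cases hxz : x = z
    · subst hxz
      obtain ⟨p, hp, hpc, hpx⟩ := hYc x
      by_cases h1 : ∃ t, A p t ∧ A t y
      · obtain ⟨t, ht⟩ := h1
        exact false_of_connectors hl hA0 hnb hy hyc hna hp hpc hz hzc hpx ht hw'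
      · by_cases h2 : ∃ t, A y t ∧ A t p
        · obtain ⟨t, ht⟩ := h2
          exact false_of_connectors hl hA0 hnb hy hyc hna hx hxc hp hpc hpx.symm hw.symm ht
        · exact false_of_no_connector hl hY hA0 hnb hy hyc hna hp hpc hz hzc hpx
            (fun t ht => h1 ⟨t, ht⟩) (fun t ht => h2 ⟨t, ht⟩)
    · exact false_of_connectors hl hA0 hnb hy hyc hna hx hxc hz hzc hxz hw.symm hw'

end Cases

/-- Lemma 3.11. -/
theorem bypass_exists_condA0 [Fintype V] (A : V → V → Prop)
    (hloops : ∀ v, ¬ A v v)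
    (Y : Set V) (hY : 4 ≤ Y.ncard)
    (hconn : SetStronglyConnected A Y) (hA0 : CondA0 A Y)
    (c : List V) (hc : IsCycleOn A c) (hnonham : ∃ v : V, v ∉ c)
    (hYc : 2 ≤ ({v | v ∈ c} ∩ Y).ncard) :
    ∀ y ∈ Y, y ∉ c → ∃ p : List V, IsBypass A c p ∧ y ∈ p := by
  intro y hy hyc
  by_contra hno
  have hYc' : ∀ s : V, ∃ x ∈ Y, x ∈ c ∧ x ≠ s := by
    intro s
    obtain ⟨x, hx, hxs⟩ := Set.exists_ne_of_one_lt_ncard (Nat.lt_of_succ_le hYc) s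
    exact ⟨x, hx.2, hx.1, hxs⟩
  refine not_noBypassThrough hloops hY hconn hA0 hYc' hy hyc ?_
  intro u v m hu hv huv hm hnd hch hym
  refine hno ⟨u :: (m ++ [v]), ⟨⟨by simp, ?_, hch⟩, ?_, ?_, ?_, ?_⟩, by simp [hym]⟩
  · have hum : u ∉ m := fun h => hm u h hu
    have hvm : v ∉ m := fun h => hm v h hv
    rw [List.nodup_cons, List.nodup_append]
    refine ⟨by simp [hum, huv], hnd, by simp, ?_⟩
    intro a ha b hb e
    rw [List.mem_singleton.1 hb] at e
    exact hvm (e ▸ ha)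
  · have := List.length_pos_of_mem hym
    simp
    omega
  · simpa using hu
  · intro b hb
    rw [← List.cons_append, List.getLast?_concat] at hb
    simp only [Option.mem_def, Option.some.injEq] at hb
    exact hb ▸ hv
  · simpa using hm
end

section
/- Let D be a strongly connected digraph of order n ≥ 2. If d(x) + d(y) ≥ 2n − 1 for all pairs of nonadjacent vertices x and y of D, then D is Hamiltonian. -/
/-!
Basic definitions for finite digraphs (no loops, no multiple arcs), where the arc
relation is `A : V → V → Prop`.  Paths and cycles are given as lists of (distinct)
vertices.
-/

variable {V : Type*}

/-- A nonempty list of distinct vertices forming a directed cycle, where a single vertex is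
allowed as a trivial cycle. -/
def IsWeakCycle (A : V → V → Prop) (l : List V) : Prop :=
  l ≠ [] ∧ l.Nodup ∧ l.IsChain A ∧ ∀ a ∈ l.getLast?, ∀ b ∈ l.head?, A a b ∨ a = b

/-- One step along an arc both of whose ends avoid `C`. -/
def StepOff (A : V → V → Prop) (C : Set V) (p q : V) : Prop := A p q ∧ p ∉ C ∧ q ∉ C

/-- `y` can be reached from `a` by a walk of positive length leaving `C` immediately. -/
def LeadsTo (A : V → V → Prop) (C : Set V) (a y : V) : Prop :=
  ∃ u, u ∉ C ∧ A a u ∧ Relation.ReflTransGen (StepOff A C) u y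

/-- `b` can be reached from `y` by a walk of positive length avoiding `C` before `b`. -/
def LeadsBack (A : V → V → Prop) (C : Set V) (y b : V) : Prop :=
  ∃ v, v ∉ C ∧ Relation.ReflTransGen (StepOff A C) y v ∧ A v b

open Classical in
/-- The number of arcs between `x` and `w`. -/
noncomputable def arcCount (A : V → V → Prop) (x w : V) : ℕ :=
  (if A x w then 1 else 0) + (if A w x then 1 else 0)

theorem IsWeakCycle.rotate {A : V → V → Prop} {l₁ l₂ : List V}
    (h : IsWeakCycle A (l₁ ++ l₂)) : IsWeakCycle A (l₂ ++ l₁) := by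
  rcases List.eq_nil_or_concat l₁ with rfl | ⟨l₁', a, rfl⟩
  · simpa using h
  rcases List.eq_nil_or_concat l₂ with rfl | ⟨l₂', b, rfl⟩
  · simpa using h
  obtain ⟨-, hnd, hch, hcl⟩ := h
  refine ⟨by simp, (List.perm_append_comm.nodup_iff).1 hnd, ?_, ?_⟩
  · rw [List.isChain_append] at hch ⊢
    refine ⟨hch.2.1, hch.1, fun x hx y hy => ?_⟩
    rcases hcl x (by rw [List.getLast?_append]; simp_all) y
      (by rw [List.head?_append]; simp_all) with h | rfl
    · exact h
    · exact absurd rfl (List.nodup_append.1 hnd |>.2.2 x (List.mem_of_mem_head? hy) x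
        (List.mem_of_mem_getLast? hx))
  · intro x hx y hy
    rw [List.isChain_append] at hch
    refine Or.inl (hch.2.2 x ?_ y ?_)
    · rw [List.getLast?_append] at hx; simp_all
    · rw [List.head?_append] at hy; simp_all

theorem exists_append_cons_cons_of_not_isChain {R : V → V → Prop} {l : List V}
    (h : ¬ l.IsChain R) : ∃ l₁ p q l₂, l = l₁ ++ p :: q :: l₂ ∧ ¬ R p q := by
  by_contra! hc
  exact h (List.isChain_iff_forall_rel_of_append_cons_cons.2
    fun p q l₁ l₂ e => hc l₁ p q l₂ e)

theorem isChain_insert {A : V → V → Prop} {l₁ l₂ : List V} {p q x : V}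
    (h : (l₁ ++ p :: q :: l₂).IsChain A) (hp : A p x) (hq : A x q) :
    (l₁ ++ p :: x :: q :: l₂).IsChain A := by
  rw [List.isChain_append] at h ⊢
  simp_all

/-- A path can absorb vertices of `T` one at a time until none of the remaining ones can be
inserted. -/
theorem exists_saturated_path (A : V → V → Prop) (a b : V) :
    ∀ (n : ℕ) (P T : List V), T.length = n → P.IsChain A → P.head? = some b →
      P.getLast? = some a →
      ∃ P' T', (P' ++ T').Perm (P ++ T) ∧ T' ⊆ T ∧ T'.length ≤ T.length ∧ P'.IsChain A ∧
        P'.head? = some b ∧ P'.getLast? = some a ∧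
        ∀ x ∈ T', P'.IsChain (fun p q => ¬ (A p x ∧ A x q)) := by
  classical
  intro n
  induction n with
  | zero =>
    intro P T hT hch hb ha
    obtain rfl := List.eq_nil_of_length_eq_zero hT
    exact ⟨P, [], .refl _, by simp, le_rfl, hch, hb, ha, by simp⟩
  | succ n ih =>
    intro P T hT hch hb ha
    by_cases hx : ∀ x ∈ T, P.IsChain (fun p q => ¬ (A p x ∧ A x q))
    · exact ⟨P, T, .refl _, fun _ h => h, le_rfl, hch, hb, ha, hx⟩
    push Not at hx
    obtain ⟨x, hxT, hx⟩ := hx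
    obtain ⟨l₁, p, q, l₂, rfl, hpq⟩ := exists_append_cons_cons_of_not_isChain hx
    replace hpq : A p x ∧ A x q := by tauto
    obtain ⟨P', T', hperm, hsub, hlen, hrest⟩ := ih (l₁ ++ p :: x :: q :: l₂) (T.erase x)
      (by rw [List.length_erase_of_mem hxT]; omega) (isChain_insert hch hpq.1 hpq.2)
      (by rw [← hb, List.head?_append, List.head?_append]; simp)
      (by rw [← ha, List.getLast?_append, List.getLast?_append]; simp)
    refine ⟨P', T', hperm.trans ?_, fun _ h => List.mem_of_mem_erase (hsub h),
      hlen.trans (List.length_erase_le), hrest⟩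
    have h₁ := List.perm_cons_erase hxT
    have h₂ : (l₁ ++ p :: x :: q :: l₂).Perm (x :: (l₁ ++ p :: q :: l₂)) := by
      simpa using List.perm_middle (a := x) (l₁ := l₁ ++ [p]) (l₂ := q :: l₂)
    refine (h₂.append_right _).trans ?_
    refine List.Perm.trans ?_ (h₁.symm.append_left _)
    exact List.perm_middle.symm

theorem exists_nodup_path_of_reflTransGen {A : V → V → Prop} {C : Set V} {u v : V}
    (hv : v ∉ C) (h : Relation.ReflTransGen (StepOff A C) u v) :
    ∃ Q : List V, Q.head? = some u ∧ Q.getLast? = some v ∧ Q.Nodup ∧ Q.IsChain A ∧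
      ∀ w ∈ Q, w ∉ C := by
  induction h using Relation.ReflTransGen.head_induction_on with
  | refl => exact ⟨[v], by simp_all⟩
  | @head p q hpq _ ih =>
    obtain ⟨Q, hh, hl, hnd, hch, hC⟩ := ih
    by_cases hp : p ∈ Q
    · obtain ⟨s, t, rfl⟩ := List.append_of_mem hp
      refine ⟨p :: t, rfl, ?_, (List.nodup_append.1 hnd).2.1, (List.isChain_append.1 hch).2.1,
        fun w hw => hC w (by simp_all)⟩
      rw [List.getLast?_append] at hl
      simpa [List.getLast?_cons] using hl
    · refine ⟨p :: Q, rfl, ?_, by simp [hp, hnd], ?_, ?_⟩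
      · rw [List.getLast?_cons, hl]; rfl
      · cases Q with
        | nil => simp
        | cons c Q =>
          obtain rfl : c = q := by simpa using hh
          exact List.isChain_cons_cons.2 ⟨hpq.1, hch⟩
      · simpa using ⟨hpq.2.1, hC⟩

theorem exists_leadsTo {A : V → V → Prop} {C : Set V} {x y : V}
    (h : Relation.ReflTransGen A x y) (hx : x ∈ C) (hy : y ∉ C) :
    ∃ a ∈ C, LeadsTo A C a y := by
  induction h with
  | refl => exact absurd hx hy
  | @tail p q _ hpq ih =>
    by_cases hp : p ∈ C
    · exact ⟨p, hp, q, hy, hpq, .refl⟩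
    · obtain ⟨a, ha, u, hu, hau, h⟩ := ih hp
      exact ⟨a, ha, u, hu, hau, h.tail ⟨hpq, hp, hy⟩⟩

theorem exists_leadsBack {A : V → V → Prop} {C : Set V} {x y : V}
    (h : Relation.ReflTransGen A y x) (hx : x ∈ C) (hy : y ∉ C) :
    ∃ b ∈ C, LeadsBack A C y b := by
  induction h using Relation.ReflTransGen.head_induction_on with
  | refl => exact absurd hx hy
  | @head p q hpq _ ih =>
    by_cases hq : q ∈ C
    · exact ⟨q, hq, p, hy, .refl, hpq⟩
    · obtain ⟨b, hb, v, hv, h, hvb⟩ := ih hq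
      exact ⟨b, hb, v, hv, h.head ⟨hpq, hy, hq⟩, hvb⟩

theorem arcCount_le_two (A : V → V → Prop) (x w : V) : arcCount A x w ≤ 2 := by
  unfold arcCount; split_ifs <;> omega

theorem sum_arcCount_le {A : V → V → Prop} {v : V} {P : List V}
    (h : P.IsChain (fun p q => ¬ (A p v ∧ A v q))) :
    (P.map (arcCount A v)).sum ≤ P.length + 1 := by
  classical
  suffices H : ∀ p l, (p :: l).IsChain (fun p q => ¬ (A p v ∧ A v q)) →
      ((p :: l).map (arcCount A v)).sum ≤ l.length + 1 + (if A v p then 1 else 0) by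
    cases P with
    | nil => simp
    | cons p l =>
      have := H p l h
      rw [List.length_cons]
      split_ifs at this <;> omega
  intro p l
  induction l generalizing p with
  | nil =>
    intro _
    simp only [List.map_cons, List.map_nil, List.sum_cons, List.sum_nil, List.length_nil, arcCount]
    split_ifs <;> omega
  | cons q l ih =>
    intro h
    rw [List.isChain_cons_cons] at h
    have h' := ih q h.2
    rw [List.map_cons, List.sum_cons, List.length_cons]
    have := h.1
    simp only [arcCount] at h' ⊢
    split_ifs at h' ⊢ <;> first | omega | simp_all

/-- A sum of terms at most `2`, one of which vanishes. -/
theorem sum_map_add_two_le {f : V → ℕ} {l : List V} {z : V} (hz : z ∈ l) (hfz : f z = 0)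
    (hf : ∀ w ∈ l, f w ≤ 2) : (l.map f).sum + 2 ≤ 2 * l.length := by
  obtain ⟨s, t, rfl⟩ := List.append_of_mem hz
  have hs := List.sum_le_card_nsmul (s.map f) 2 (by
    intro k hk; obtain ⟨w, hw, rfl⟩ := List.mem_map.1 hk; exact hf w (by simp [hw]))
  have ht := List.sum_le_card_nsmul (t.map f) 2 (by
    intro k hk; obtain ⟨w, hw, rfl⟩ := List.mem_map.1 hk; exact hf w (by simp [hw]))
  simp only [List.length_map, smul_eq_mul] at hs ht
  simp only [List.map_append, List.map_cons, List.sum_append, List.sum_cons, List.length_append,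
    List.length_cons]
  omega

theorem deg_eq_sum_arcCount [Fintype V] (A : V → V → Prop) (x : V) :
    deg A x = (Finset.univ.toList.map (arcCount A x)).sum := by
  classical
  rw [Finset.sum_map_toList]
  simp only [deg, outDeg, inDeg, Set.ncard_eq_toFinset_card', Set.toFinset_ofPred,
    Finset.card_filter, ← Finset.sum_add_distrib]
  refine Finset.sum_congr rfl fun w _ => ?_
  simp only [arcCount]

theorem StronglyConnected.reflTransGen {A : V → V → Prop} (h : StronglyConnected A) (x y : V) :
    Relation.ReflTransGen A x y := by
  by_cases hxy : x = y
  · exact hxy ▸ .refl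
  obtain ⟨l, ⟨hne, -, hch⟩, hx, hy⟩ := h x y hxy
  cases l with
  | nil => exact absurd rfl hne
  | cons c l =>
    obtain rfl : c = x := by simpa using hx
    have hlast : (c :: l).getLast (by simp) = y := by
      rw [List.getLast?_eq_some_getLast (by simp)] at hy
      simpa using hy
    exact hlast ▸ List.relationReflTransGen_of_exists_isChain_cons l hch rfl

section Longest

variable {A : V → V → Prop} {C : Set V} {P T : List V} {y a b : V}

/-- A path covering a longest cycle cannot be closed up outside that cycle. -/
theorem exists_longer_of_leadsTo_of_leadsBack
    (hnd : P.Nodup) (hch : P.IsChain A) (hC : ∀ v, v ∈ P ↔ v ∈ C)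
    (hb : P.head? = some b) (ha : P.getLast? = some a)
    (hay : LeadsTo A C a y) (hyb : LeadsBack A C y b) :
    ∃ l, IsWeakCycle A l ∧ P.length < l.length := by
  obtain ⟨u, hu, hau, huy⟩ := hay
  obtain ⟨v, hv, hyv, hvb⟩ := hyb
  obtain ⟨Q, hQu, hQv, hQnd, hQch, hQC⟩ := exists_nodup_path_of_reflTransGen hv (huy.trans hyv)
  have hQ : Q ≠ [] := by rintro rfl; simp at hQu
  refine ⟨P ++ Q, ⟨by simp [hQ], ?_, ?_, ?_⟩, ?_⟩
  · refine List.nodup_append.2 ⟨hnd, hQnd, ?_⟩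
    rintro p hp _ hq rfl
    exact hQC p hq ((hC p).1 hp)
  · refine List.isChain_append.2 ⟨hch, hQch, ?_⟩
    intro p hp q hq
    simp_all
  · intro p hp q hq
    rw [List.getLast?_append] at hp
    rw [List.head?_append] at hq
    simp_all
  · have := List.length_pos_iff.2 hQ
    rw [List.length_append]; omega

/-- A vertex off a longest cycle cannot be inserted into it. -/
theorem exists_longer_of_not_isChain (hcyc : IsWeakCycle A (P ++ T)) (hy : y ∉ P ++ T)
    (h : ¬ P.IsChain (fun p q => ¬ (A p y ∧ A y q))) :
    ∃ l, IsWeakCycle A l ∧ (P ++ T).length < l.length := by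
  obtain ⟨l₁, p, q, l₂, rfl, hpq⟩ := exists_append_cons_cons_of_not_isChain h
  rw [not_not] at hpq
  obtain ⟨-, hnd, hch, hcl⟩ := hcyc
  have hperm : (l₁ ++ p :: y :: q :: (l₂ ++ T)).Perm (y :: (l₁ ++ p :: q :: l₂ ++ T)) := by
    simpa using List.perm_middle (a := y) (l₁ := l₁ ++ [p]) (l₂ := q :: (l₂ ++ T))
  refine ⟨l₁ ++ p :: y :: q :: (l₂ ++ T), ⟨by simp, ?_, ?_, ?_⟩, ?_⟩
  · exact hperm.nodup_iff.2 (List.nodup_cons.2 ⟨hy, hnd⟩)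
  · exact isChain_insert (by simpa using hch) hpq.1 hpq.2
  · intro c hc d hd
    refine hcl c ?_ d ?_
    · simpa [List.getLast?_append, List.getLast?_cons] using hc
    · simpa [List.head?_append] using hd
  · rw [hperm.length_eq]; simp

/-- The degree count: if `y` is attached to the longest cycle `P ++ T` at the ends of `P` only
and has no short connection with `T`, the degree condition fails. -/
theorem false_of_no_shorter_gap [Fintype V] (hloops : ∀ v, ¬ A v v)
    (hdeg : ∀ x y : V, x ≠ y → ¬ DAdj A x y →
      deg A x + deg A y ≥ 2 * Fintype.card V - 1)
    (hcyc : IsWeakCycle A (P ++ T)) (hC : ∀ v, v ∈ P ++ T ↔ v ∈ C)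
    (hmax : ∀ l, IsWeakCycle A l → l.length ≤ (P ++ T).length)
    (hb : P.head? = some b) (ha : P.getLast? = some a) (hy : y ∉ C)
    (hay : LeadsTo A C a y) (hyb : LeadsBack A C y b)
    (hto : ∀ x ∈ T, ¬ LeadsTo A C x y) (hback : ∀ x ∈ T, ¬ LeadsBack A C y x) : False := by
  classical
  have hyPT : y ∉ P ++ T := fun h => hy ((hC y).1 h)
  have hPch : P.IsChain A := (List.isChain_append.1 hcyc.2.2.1).1
  obtain ⟨P', T', hperm, hsub, hlen, hch', hb', ha', hins⟩ :=
    exists_saturated_path A a b T.length P T rfl hPch hb ha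
  have hnd' : (P' ++ T').Nodup := hperm.nodup_iff.2 hcyc.2.1
  rcases T' with _ | ⟨x, T'⟩
  · rw [List.append_nil] at hperm hnd'
    obtain ⟨l, hl, hlt⟩ := exists_longer_of_leadsTo_of_leadsBack hnd' hch'
      (fun v => hperm.mem_iff.trans (hC v)) hb' ha' hay hyb
    exact absurd (hmax l hl) (by rw [← hperm.length_eq]; omega)
  have hxT : x ∈ T := hsub (by simp)
  have hxC : x ∈ C := (hC x).1 (by simp [hxT])
  have hxy' : ∀ w ∈ T, ¬ A w y := fun w hw h => hto w hw ⟨y, hy, h, .refl⟩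
  have hyx' : ∀ w ∈ T, ¬ A y w := fun w hw h => hback w hw ⟨y, hy, .refl, h⟩
  have hxy : x ≠ y := by rintro rfl; exact hy hxC
  have hd := hdeg x y hxy (by rintro (h | h); exacts [hxy' x hxT h, hyx' x hxT h])
  set R := (Finset.univ.filter (fun v => v ∉ C)).toList with hR
  have hRmem : ∀ w, w ∈ R ↔ w ∉ C := by simp [hR]
  have hall : (P ++ T ++ R).Perm Finset.univ.toList := by
    refine (List.perm_ext_iff_of_nodup ?_ (Finset.nodup_toList _)).2 fun v => ?_
    · refine List.nodup_append.2 ⟨hcyc.2.1, Finset.nodup_toList _, ?_⟩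
      rintro p hp _ hq rfl
      exact (hRmem p).1 hq ((hC p).1 hp)
    · rw [List.mem_append, hC, hRmem]
      simp [em]
  have hall' := (hperm.append_right R).trans hall
  have hcard := hall.length_eq
  have hcard' := hperm.length_eq
  rw [Finset.length_toList, Finset.card_univ] at hcard
  have hdx := (hall'.map (arcCount A x)).sum_eq
  have hdy := (hall.map (arcCount A y)).sum_eq
  rw [← deg_eq_sum_arcCount] at hdx hdy
  have hxP' := sum_arcCount_le (hins x (by simp))
  have hyP : (P.map (arcCount A y)).sum ≤ P.length + 1 := by
    refine sum_arcCount_le ?_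
    by_contra hcon
    obtain ⟨l, hl, hlt⟩ := exists_longer_of_not_isChain hcyc hyPT hcon
    exact absurd (hmax l hl) (by omega)
  have hxT' := sum_map_add_two_le (f := arcCount A x) (l := x :: T') (z := x) (by simp)
    (by simp [arcCount, hloops]) (fun w _ => arcCount_le_two A x w)
  have hyT : (T.map (arcCount A y)).sum = 0 := by
    refine List.sum_eq_zero fun k hk => ?_
    obtain ⟨w, hw, rfl⟩ := List.mem_map.1 hk
    simp [arcCount, hxy' w hw, hyx' w hw]
  have hR2 := sum_map_add_two_le (f := fun w => arcCount A x w + arcCount A y w) (l := R) (z := y)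
    ((hRmem y).2 hy) (by simp [arcCount, hloops, hxy' x hxT, hyx' x hxT]) (by
      intro w hw
      have hw := (hRmem w).1 hw
      have h₁ : ¬ (A x w ∧ A w y) := fun h =>
        hto x hxT ⟨w, hw, h.1, .single ⟨h.2, hw, hy⟩⟩
      have h₂ : ¬ (A y w ∧ A w x) := fun h =>
        hback x hxT ⟨w, hw, .single ⟨h.1, hy, hw⟩, h.2⟩
      simp only [arcCount]
      split_ifs <;> first | omega | simp_all)
  rw [List.sum_map_add] at hR2
  simp only [List.map_append, List.sum_append, List.length_append, List.length_cons] at *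
  omega

/-- No ear, open or closed, can be attached to a longest cycle. -/
theorem false_of_gap [Fintype V] (hloops : ∀ v, ¬ A v v)
    (hdeg : ∀ x y : V, x ≠ y → ¬ DAdj A x y →
      deg A x + deg A y ≥ 2 * Fintype.card V - 1) (hy : y ∉ C) {m : ℕ}
    (hmax : ∀ l, IsWeakCycle A l → l.length ≤ m)
    (k : ℕ) : ∀ (P T : List V) (a b : V), T.length = k → (P ++ T).length = m →
      IsWeakCycle A (P ++ T) → (∀ v, v ∈ P ++ T ↔ v ∈ C) →
      P.head? = some b → P.getLast? = some a → LeadsTo A C a y → LeadsBack A C y b → False := by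
  induction k using Nat.strong_induction_on with
  | _ k ih =>
    intro P T a b hT hm hcyc hC hb ha hay hyb
    refine false_of_no_shorter_gap hloops hdeg hcyc hC (by simpa only [hm] using hmax) hb ha hy
      hay hyb ?_ ?_
    · intro x hx hxy
      obtain ⟨T₁, T₂, rfl⟩ := List.append_of_mem hx
      refine ih T₂.length (by simp at hT; omega) (P ++ T₁ ++ [x]) T₂ x b rfl
        (by simpa using hm) (by simpa using hcyc) (by simpa using hC) ?_ (by simp) hxy hyb
      rw [List.append_assoc, List.head?_append, hb]; rfl
    · intro x hx hxy
      obtain ⟨T₁, T₂, rfl⟩ := List.append_of_mem hx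
      have hcyc' : IsWeakCycle A (x :: T₂ ++ P ++ T₁) := by
        have := IsWeakCycle.rotate (l₁ := P ++ T₁) (l₂ := x :: T₂) (by simpa using hcyc)
        simpa using this
      refine ih T₁.length (by simp at hT; omega) (x :: T₂ ++ P) T₁ a x rfl
        ?_ hcyc' ?_ (by simp) ?_ hay hxy
      · simp at hm ⊢; omega
      · intro v; rw [← hC]; simp; tauto
      · rw [List.getLast?_append, ha]; rfl

/-- Under Meyniel's condition a weak cycle missing a vertex is not a longest one. -/
theorem IsWeakCycle.exists_longer [Fintype V] (hloops : ∀ v, ¬ A v v)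
    (hconn : StronglyConnected A)
    (hdeg : ∀ x y : V, x ≠ y → ¬ DAdj A x y →
      deg A x + deg A y ≥ 2 * Fintype.card V - 1) {l : List V} (hl : IsWeakCycle A l)
    (hy : y ∉ l) : ∃ l', IsWeakCycle A l' ∧ l.length < l'.length := by
  by_contra! hmax
  obtain ⟨x, hx⟩ := List.exists_mem_of_ne_nil l hl.1
  obtain ⟨a, ha, hay⟩ := exists_leadsTo (C := {v | v ∈ l}) (hconn.reflTransGen x y) hx hy
  obtain ⟨b, hb, hyb⟩ := exists_leadsBack (C := {v | v ∈ l}) (hconn.reflTransGen y x) hx hy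
  obtain ⟨l₁, l₂, hl₁₂⟩ := List.append_of_mem hb
  have hperm : (b :: l₂ ++ l₁).Perm l := hl₁₂ ▸ List.perm_append_comm
  have hcyc : IsWeakCycle A (b :: l₂ ++ l₁) := (hl₁₂ ▸ hl).rotate
  obtain ⟨s, t, hst⟩ := List.append_of_mem (hperm.mem_iff.2 ha)
  have hst' : b :: l₂ ++ l₁ = s ++ [a] ++ t := by simpa using hst
  have hb' : (s ++ [a]).head? = some b := by
    cases s <;> simp_all
  rw [hst'] at hcyc hperm
  exact false_of_gap hloops hdeg (C := {v | v ∈ l}) hy hmax t.length (s ++ [a]) t a b rfl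
    hperm.length_eq hcyc (fun v => hperm.mem_iff) hb' (by simp) hay hyb

end Longest

/-- Meyniel's theorem. -/
theorem meyniel_hamiltonian [Fintype V] (A : V → V → Prop)
    (hloops : ∀ v, ¬ A v v)
    (hn : 2 ≤ Fintype.card V) (hconn : StronglyConnected A)
    (hdeg : ∀ x y : V, x ≠ y → ¬ DAdj A x y →
      deg A x + deg A y ≥ 2 * Fintype.card V - 1) :
    ∃ l : List V, IsCycleOn A l ∧ ∀ v : V, v ∈ l := by
  classical
  have hgrow : ∀ k (l : List V), IsWeakCycle A l → Fintype.card V - l.length = k →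
      ∃ l', IsWeakCycle A l' ∧ ∀ v, v ∈ l' := by
    intro k
    induction k using Nat.strong_induction_on with
    | _ k ih =>
      intro l hl hk
      by_cases hall : ∀ v, v ∈ l
      · exact ⟨l, hl, hall⟩
      push Not at hall
      obtain ⟨y, hy⟩ := hall
      obtain ⟨l', hl', hlt⟩ := hl.exists_longer hloops hconn hdeg hy
      have := hl'.2.1.length_le_card
      exact ih _ (by omega) l' hl' rfl
  obtain ⟨x⟩ : Nonempty V := Fintype.card_pos_iff.1 (by omega)
  obtain ⟨l, ⟨-, hnd, hch, hcl⟩, hall⟩ := hgrow _ [x] ⟨by simp, by simp, by simp, by simp⟩ rfl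
  have hlen : 2 ≤ l.length := by
    rw [← List.toFinset_card_of_nodup hnd, Finset.eq_univ_iff_forall.2 fun v => List.mem_toFinset.2 (hall v)]
    exact hn
  refine ⟨l, ⟨hlen, hnd, hch, fun a ha b hb => (hcl a ha b hb).resolve_right ?_⟩, hall⟩
  rintro rfl
  match l with
  | [] => simp at hlen
  | [_] => simp at hlen
  | c :: d :: t =>
    obtain rfl : c = a := by simpa using hb
    rw [List.getLast?_cons_cons] at ha
    exact (List.nodup_cons.1 hnd).1 (List.mem_of_mem_getLast? ha)
end
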